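/- Let 0 < d < 2 and set α* = arcsin(d/2), and define on the rectangle Ξ = [0,π] × [α*, π−α*] the functions L(d,σ,δ) = 2π − 4·arcsin(d_L(d,σ,δ)/4) + 2δ and R(d,σ,δ) = 4π − 4·arcsin(d_R(d,σ,δ)/4) − 2δ. Then for each fixed δ ∈ [α*, π−α*], the function σ ↦ L(d,σ,δ) is strictly decreasing on [0,π] and σ ↦ R(d,σ,δ) is strictly increasing on [0,π]; and for each fixed σ ∈ [0,π], the function δ ↦ L(d,σ,δ) is strictly increasing on [α*, π−α*] and δ ↦ R(d,σ,δ) is strictly decreasing on [α*, π−α*]. -/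

import Mathlib

open Real

/-- Distance between the centers of the two left disks, in `(σ, δ)` coordinates. -/
noncomputable def dL (d σ δ : ℝ) : ℝ :=
  Real.sqrt (d ^ 2 - 4 * d * Real.sin δ * Real.cos σ + 4 * Real.sin δ ^ 2)

/-- Distance between the centers of the two right disks, in `(σ, δ)` coordinates. -/
noncomputable def dR (d σ δ : ℝ) : ℝ :=
  Real.sqrt (d ^ 2 + 4 * d * Real.sin δ * Real.cos σ + 4 * Real.sin δ ^ 2)

/-- Length of the LRL-type bounded-curvature path. -/
noncomputable def Lfun (d σ δ : ℝ) : ℝ :=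
  2 * π - 4 * Real.arcsin (dL d σ δ / 4) + 2 * δ

/-- Length of the RLR-type bounded-curvature path. -/
noncomputable def Rfun (d σ δ : ℝ) : ℝ :=
  4 * π - 4 * Real.arcsin (dR d σ δ / 4) - 2 * δ

/-- Minimum of the LRL- and RLR-path lengths. -/
noncomputable def Cfun (d σ δ : ℝ) : ℝ :=
  min (Lfun d σ δ) (Rfun d σ δ)

/-- The supremum of `Cfun` over the rectangle `Ξ(d) = [0, π] × [α*, π - α*]`,
where `α* = arcsin (d/2)`. -/
noncomputable def Afun (d : ℝ) : ℝ :=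
  sSup ((fun p : ℝ × ℝ => Cfun d p.1 p.2) ''
    (Set.Icc 0 π ×ˢ Set.Icc (Real.arcsin (d / 2)) (π - Real.arcsin (d / 2))))

/-- Auxiliary squared distance. -/
noncomputable def qq (d c δ : ℝ) : ℝ := d ^ 2 - 4 * d * Real.sin δ * c + 4 * Real.sin δ ^ 2

/-- Auxiliary arcsine term. -/
noncomputable def gg (d c δ : ℝ) : ℝ := 4 * Real.arcsin (Real.sqrt (qq d c δ) / 4)

lemma gg_cont (d c : ℝ) : Continuous (gg d c) := by
  unfold gg qq
  exact continuous_const.mul (Real.continuous_arcsin.comp (by fun_prop))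

lemma qq_bounds (d c s : ℝ) (hd0 : 0 < d) (hs : d < 2 * s) (hs1 : s ≤ 1)
    (h1 : -1 ≤ c) (h2 : c ≤ 1) :
    0 < d ^ 2 - 4 * d * s * c + 4 * s ^ 2 ∧ d ^ 2 - 4 * d * s * c + 4 * s ^ 2 < 16 * s ^ 2 := by
  have hds : 0 < d * s := mul_pos hd0 (by linarith)
  constructor
  · nlinarith [mul_nonneg hds.le (sub_nonneg.2 h2), mul_pos (sub_pos.2 hs) (sub_pos.2 hs)]
  · nlinarith [mul_nonneg hds.le (by linarith : 0 ≤ c + 1), mul_pos (sub_pos.2 hs) (by linarith : 0 < 6 * s + d)]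

lemma key (d c s k : ℝ) (hd0 : 0 < d) (hs : d < 2 * s) (hk : s ^ 2 + k ^ 2 = 1) (hs1 : s ≤ 1)
    (h1 : -1 ≤ c) (h2 : c ≤ 1) :
    (4 * k * (2 * s - d * c)) ^ 2 <
      (d ^ 2 - 4 * d * s * c + 4 * s ^ 2) * (16 - (d ^ 2 - 4 * d * s * c + 4 * s ^ 2)) := by
  obtain ⟨hq0, hq1⟩ := qq_bounds d c s hd0 hs hs1 h1 h2
  set x := d ^ 2 - 4 * d * s * c + 4 * s ^ 2 with hx
  have he : 0 ≤ d ^ 2 * (1 - c ^ 2) := mul_nonneg (sq_nonneg _) (by nlinarith)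
  have hxe : x = (2 * s - d * c) ^ 2 + d ^ 2 * (1 - c ^ 2) := by rw [hx]; ring
  have hss : s ^ 2 ≤ 1 := by nlinarith [sq_nonneg k]
  have hu := sq_nonneg (2 * s - d * c)
  have hk2 : k ^ 2 = 1 - s ^ 2 := by linarith
  have e1 : (4 * k * (2 * s - d * c)) ^ 2 = 16 * (1 - s ^ 2) * (2 * s - d * c) ^ 2 := by
    rw [← hk2]; ring
  rw [e1]
  generalize (2 * s - d * c) ^ 2 = U at *
  generalize d ^ 2 * (1 - c ^ 2) = e at *
  nlinarith [mul_pos hq0 (sub_pos.2 hq1), mul_nonneg he (sub_nonneg.2 hss)]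

lemma gg_deriv (d c δ : ℝ) (hd0 : 0 < d) (hs : d < 2 * Real.sin δ)
    (h1 : -1 ≤ c) (h2 : c ≤ 1) :
    ∃ g', HasDerivAt (gg d c) g' δ ∧ |g'| < 2 := by
  have hs1 := Real.sin_le_one δ
  have hq := qq_bounds d c _ hd0 hs hs1 h1 h2
  have hkey := key d c _ (Real.cos δ) hd0 hs (Real.sin_sq_add_cos_sq δ) hs1 h1 h2
  have hqd : HasDerivAt (qq d c) (4 * Real.cos δ * (2 * Real.sin δ - d * c)) δ := by
    have hsd := Real.hasDerivAt_sin δ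
    have := (((hsd.const_mul (4 * d)).mul_const c).const_sub (d ^ 2)).add
      ((hsd.pow 2).const_mul 4)
    have e : 4 * Real.cos δ * (2 * Real.sin δ - d * c) = -(4 * d * Real.cos δ * c)
        + 4 * (((2 : ℕ) : ℝ) * Real.sin δ ^ (2 - 1) * Real.cos δ) := by
      norm_num; ring
    rw [e]
    exact this
  change 0 < qq d c δ ∧ qq d c δ < _ at hq
  change _ < qq d c δ * (16 - qq d c δ) at hkey
  obtain ⟨hq0, hq1⟩ := hq
  have hq16 : qq d c δ < 16 := by nlinarith [Real.sin_sq_le_one δ]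
  have hx0 := Real.sqrt_pos.2 hq0
  have hxx := Real.sq_sqrt hq0.le
  have hx4 : Real.sqrt (qq d c δ) < 4 := by
    rw [Real.sqrt_lt' (by norm_num)]; linarith
  have hd := ((Real.hasDerivAt_arcsin (x := Real.sqrt (qq d c δ) / 4) (by linarith)
    (by linarith)).comp δ ((hqd.sqrt hq0.ne').div_const 4)).const_mul 4
  refine ⟨_, hd, ?_⟩
  set x := Real.sqrt (qq d c δ)
  have hw : 0 < 1 - (x / 4) ^ 2 := by nlinarith
  have hw0 := Real.sqrt_pos.2 hw
  have hww := Real.sq_sqrt hw.le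
  set w := Real.sqrt (1 - (x / 4) ^ 2)
  generalize 4 * Real.cos δ * (2 * Real.sin δ - d * c) = p at *
  have e : 4 * (1 / w * (p / (2 * x) / 4)) = p / (2 * (x * w)) := by field_simp
  rw [e, abs_div, abs_of_pos (by positivity : 0 < 2 * (x * w)), div_lt_iff₀ (by positivity)]
  have : |p| < 4 * (x * w) := by
    apply abs_lt_of_sq_lt_sq _ (by positivity)
    rw [mul_pow, mul_pow, hww, hxx, div_pow, hxx]
    linarith
  linarith

lemma sin_gt (d δ : ℝ) (hd0 : 0 < d) (hd2 : d < 2)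
    (h : δ ∈ Set.Ioo (Real.arcsin (d / 2)) (π - Real.arcsin (d / 2))) :
    d < 2 * Real.sin δ := by
  have h0 : 0 < Real.arcsin (d / 2) := Real.arcsin_pos.2 (by linarith)
  have hsa : Real.sin (Real.arcsin (d / 2)) = d / 2 := Real.sin_arcsin (by linarith) (by linarith)
  suffices Real.sin (Real.arcsin (d / 2)) < Real.sin δ by linarith
  obtain ⟨ha, hb⟩ := h
  rcases le_total δ (π / 2) with hδ | hδ
  · exact Real.sin_lt_sin_of_lt_of_le_pi_div_two (by linarith [Real.pi_pos]) hδ ha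
  · rw [← Real.sin_pi_sub δ]
    exact Real.sin_lt_sin_of_lt_of_le_pi_div_two (by linarith [Real.pi_pos]) (by linarith)
      (by linarith)

lemma gg_lip (d c : ℝ) (hd0 : 0 < d) (hd2 : d < 2) (h1 : -1 ≤ c) (h2 : c ≤ 1) :
    StrictMonoOn (fun δ => 2 * δ - gg d c δ)
        (Set.Icc (Real.arcsin (d / 2)) (π - Real.arcsin (d / 2))) ∧
    StrictMonoOn (fun δ => 2 * δ + gg d c δ)
        (Set.Icc (Real.arcsin (d / 2)) (π - Real.arcsin (d / 2))) := by
  have hc := gg_cont d c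
  constructor
  · apply strictMonoOn_of_deriv_pos (convex_Icc _ _) (by fun_prop)
    intro δ hδ
    rw [interior_Icc] at hδ
    obtain ⟨g', hg, hb⟩ := gg_deriv d c δ hd0 (sin_gt d δ hd0 hd2 hδ) h1 h2
    have := (((hasDerivAt_id δ).const_mul 2).sub hg).deriv
    change deriv (fun δ => 2 * δ - gg d c δ) δ = _ at this
    rw [this]; linarith [(abs_lt.1 hb).2]
  · apply strictMonoOn_of_deriv_pos (convex_Icc _ _) (by fun_prop)
    intro δ hδ
    rw [interior_Icc] at hδ
    obtain ⟨g', hg, hb⟩ := gg_deriv d c δ hd0 (sin_gt d δ hd0 hd2 hδ) h1 h2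
    have := (((hasDerivAt_id δ).const_mul 2).add hg).deriv
    change deriv (fun δ => 2 * δ + gg d c δ) δ = _ at this
    rw [this]; linarith [(abs_lt.1 hb).1]

lemma sin_ge (d δ : ℝ) (hd0 : 0 < d) (hd2 : d < 2)
    (h : δ ∈ Set.Icc (Real.arcsin (d / 2)) (π - Real.arcsin (d / 2))) :
    d ≤ 2 * Real.sin δ := by
  have h0 : 0 < Real.arcsin (d / 2) := Real.arcsin_pos.2 (by linarith)
  have hsa : Real.sin (Real.arcsin (d / 2)) = d / 2 := Real.sin_arcsin (by linarith) (by linarith)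
  suffices Real.sin (Real.arcsin (d / 2)) ≤ Real.sin δ by linarith
  obtain ⟨ha, hb⟩ := h
  rcases le_total δ (π / 2) with hδ | hδ
  · exact Real.sin_le_sin_of_le_of_le_pi_div_two (by linarith [Real.pi_pos]) hδ ha
  · rw [← Real.sin_pi_sub δ]
    exact Real.sin_le_sin_of_le_of_le_pi_div_two (by linarith [Real.pi_pos]) (by linarith)
      (by linarith)

lemma gg_anti (d δ c c' : ℝ) (hd0 : 0 < d) (hd2 : d < 2) (hs : d ≤ 2 * Real.sin δ)
    (h1 : -1 ≤ c) (h2 : c < c') (h3 : c' ≤ 1) : gg d c' δ < gg d c δ := by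
  have hs1 := Real.sin_le_one δ
  have hds : 0 < d * Real.sin δ := mul_pos hd0 (by linarith)
  have a1 : 0 ≤ qq d c' δ := by
    unfold qq
    nlinarith [mul_nonneg hds.le (sub_nonneg.2 h3), sq_nonneg (d - 2 * Real.sin δ)]
  have a2 : qq d c' δ < qq d c δ := by
    unfold qq
    nlinarith [mul_pos hds (sub_pos.2 h2)]
  have a3 : qq d c δ ≤ 4 ^ 2 := by
    unfold qq
    nlinarith [mul_nonneg hds.le (by linarith : 0 ≤ c + 1)]
  have b1 := Real.sqrt_nonneg (qq d c' δ)
  have b2 := Real.sqrt_lt_sqrt a1 a2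
  have b3 : Real.sqrt (qq d c δ) ≤ 4 := Real.sqrt_le_iff.2 ⟨by norm_num, a3⟩
  have := Real.strictMonoOn_arcsin (a := Real.sqrt (qq d c' δ) / 4)
    (b := Real.sqrt (qq d c δ) / 4) ⟨by linarith, by linarith⟩ ⟨by linarith, by linarith⟩
    (by linarith)
  unfold gg
  linarith

lemma L_eq (d σ δ : ℝ) : Lfun d σ δ = 2 * π - gg d (Real.cos σ) δ + 2 * δ := rfl

lemma R_eq (d σ δ : ℝ) : Rfun d σ δ = 4 * π - gg d (-Real.cos σ) δ - 2 * δ := by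
  unfold Rfun gg dR qq
  congr 6
  ring_nf

/-- Let `0 < d < 2` and `α* = arcsin (d/2)`.  On the rectangle
`Ξ = [0, π] × [α*, π - α*]`: for fixed `δ`, `σ ↦ L` is strictly decreasing and
`σ ↦ R` is strictly increasing on `[0, π]`; for fixed `σ`, `δ ↦ L` is strictly
increasing and `δ ↦ R` is strictly decreasing on `[α*, π - α*]`. -/
theorem L_R_monotone (d : ℝ) (hd0 : 0 < d) (hd2 : d < 2) :
    (∀ δ ∈ Set.Icc (Real.arcsin (d / 2)) (π - Real.arcsin (d / 2)),
      StrictAntiOn (fun σ => Lfun d σ δ) (Set.Icc 0 π) ∧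
      StrictMonoOn (fun σ => Rfun d σ δ) (Set.Icc 0 π)) ∧
    (∀ σ ∈ Set.Icc (0:ℝ) π,
      StrictMonoOn (fun δ => Lfun d σ δ)
        (Set.Icc (Real.arcsin (d / 2)) (π - Real.arcsin (d / 2))) ∧
      StrictAntiOn (fun δ => Rfun d σ δ)
        (Set.Icc (Real.arcsin (d / 2)) (π - Real.arcsin (d / 2)))) := by
  refine ⟨fun δ hδ => ?_, fun σ hσ => ?_⟩
  · have hs := sin_ge d δ hd0 hd2 hδ
    constructor
    · intro a ha b hb hab
      have := Real.strictAntiOn_cos ha hb hab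
      have := gg_anti d δ _ _ hd0 hd2 hs (Real.neg_one_le_cos b) this (Real.cos_le_one a)
      simp only [L_eq]; linarith
    · intro a ha b hb hab
      have := Real.strictAntiOn_cos ha hb hab
      have := gg_anti d δ (-Real.cos a) (-Real.cos b) hd0 hd2 hs
        (by linarith [Real.cos_le_one a]) (by linarith) (by linarith [Real.neg_one_le_cos b])
      simp only [R_eq]; linarith
  · constructor
    · intro a ha b hb hab
      have := (gg_lip d (Real.cos σ) hd0 hd2 (Real.neg_one_le_cos σ) (Real.cos_le_one σ)).1 ha hb hab
      simp only [L_eq] at *; linarith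
    · intro a ha b hb hab
      have := (gg_lip d (-Real.cos σ) hd0 hd2 (by linarith [Real.cos_le_one σ])
        (by linarith [Real.neg_one_le_cos σ])).2 ha hb hab
      simp only [R_eq] at *; linarith
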